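/- arXiv:1806.04018 — 3 statements merged into one kernel-verified Lean document; each statement's English description precedes it below -/
import Mathlib

section
/- Let W be a reduced and cyclically reduced word of length n representing an element of F₂, and suppose W = U ++ V where U and V are nonempty words. Assume there exists a natural number r with 0 < r < n such that U occurs at offset r in the bi-infinite periodic extension W̃ of W, and there exists a natural number s with s < n and s ≠ |U| such that V occurs at offset s in W̃. Then there exist words B, C, I and a natural number k > 0 such that 0 < |C| < n, B is a terminal subword of C, I is an initial subword of C, and W = B ++ C^k ++ I. -/
/-!
A word with a period `p < n` is a power of its prefix of length `p` followed by a prefix of that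
prefix, so it suffices to find a period of `W = U ++ V` that is positive and smaller than `n`.

If the second occurrence of `U` or of `V` runs across the end of a copy of `W`, then some `W.drop p`
with `0 < p < n` is a prefix of `W`, so `p` is such a period. Otherwise the prefix of `W` of length
`r + |U|` has period `r` and the suffix of `W` starting at `s < |U|` has period `|U| - s`. They
overlap in a factor of length `r + (|U| - s)`, exactly the sum of the two periods, so by the
Fine–Wilf theorem the overlap has period `gcd r (|U| - s)`, and this period spreads to all of `W`.
-/

/-- `wordPow C k` is the concatenation of `k` copies of the word `C`. -/
def wordPow {α : Type*} (C : List α) (k : ℕ) : List α := (List.replicate k C).flatten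

/-- `OccursAt W U r` says that the word `U` occurs at offset `r` in the bi-infinite
periodic extension `W̃` of `W`, where `W̃ i = W[i mod |W|]`. -/
def OccursAt {α : Type*} (W U : List α) (r : ℤ) : Prop :=
  ∀ i : ℕ, i < U.length → W[((r + i) % (W.length : ℤ)).toNat]? = U[i]?

/-- A word over `(Fin 2) × Bool` is reduced if it has no two adjacent letters of the
form `(i, b)`, `(i, !b)`. -/
def Reduced (w : List ((Fin 2) × Bool)) : Prop :=
  List.Chain' (fun a b => ¬(a.1 = b.1 ∧ b.2 = !a.2)) w

/-- A word is cyclically reduced if it is reduced and its last letter and first letter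
are not of the form `(i, b)`, `(i, !b)`. -/
def CyclicallyReduced (w : List ((Fin 2) × Bool)) : Prop :=
  Reduced w ∧ ∀ a b, w.getLast? = some a → w.head? = some b → ¬(a.1 = b.1 ∧ b.2 = !a.2)

section Periods

variable {α : Type*} {w v : List α} {d p q m n : ℕ}

open List (HasPeriod hasPeriod_iff_getElem?)

theorem hasPeriod_iff_drop_isPrefix : HasPeriod w p ↔ w.drop p <+: w := by
  rw [← List.prefix_append_right_inj (w.take p), List.take_append_drop, HasPeriod]

theorem hasPeriod_iff_getElem?_eq_of_modEq :
    HasPeriod w p ↔ ∀ i < w.length, ∀ j < w.length, i ≡ j [MOD p] → w[i]? = w[j]? := by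
  constructor
  · intro hw i hi j hj hij
    rw [← hw.getElem?_mod p i w hi, ← hw.getElem?_mod p j w hj, hij]
  · intro hw
    rw [hasPeriod_iff_getElem?]
    intro i hi
    exact hw i (by lia) (i + p) (by lia) (by simp [Nat.ModEq])

theorem exists_mem_Ico_modEq (m i : ℕ) (hp : 0 < p) :
    ∃ j ∈ Finset.Ico m (m + p), j ≡ i [MOD p] := by
  have hi : i % p ∈ (Finset.Ico m (m + p)).image (· % p) := by
    rw [Nat.image_Ico_mod, Finset.mem_range]
    exact Nat.mod_lt i hp
  exact Finset.mem_image.1 hi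

theorem hasPeriod_of_isInfix_of_dvd (hp : 0 < p) (hdp : d ∣ p) (hw : HasPeriod w p)
    (hvw : v <:+: w) (hpv : p ≤ v.length) (hv : HasPeriod v d) : HasPeriod w d := by
  obtain ⟨a, b, rfl⟩ := hvw
  -- Modulo `p`, and hence modulo `d`, every index of `w` is congruent to an index inside `v`.
  have exists_index (i : ℕ) (hi : i < (a ++ v ++ b).length) :
      ∃ j < v.length, a.length + j ≡ i [MOD d] ∧ (a ++ v ++ b)[i]? = v[j]? := by
    obtain ⟨l, hl, hli⟩ := exists_mem_Ico_modEq a.length i hp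
    obtain ⟨j, rfl⟩ := Nat.exists_eq_add_of_le (Finset.mem_Ico.1 hl).1
    have hj : j < v.length := by grind
    refine ⟨j, hj, hli.of_dvd hdp, ?_⟩
    rw [← hasPeriod_iff_getElem?_eq_of_modEq.1 hw _ (by grind) i hi hli]
    grind
  rw [hasPeriod_iff_getElem?_eq_of_modEq]
  intro i hi i' hi' hii'
  obtain ⟨j, hj, hji, hwi⟩ := exists_index i hi
  obtain ⟨j', hj', hji', hwi'⟩ := exists_index i' hi'
  have hjj' : j ≡ j' [MOD d] := Nat.ModEq.add_left_cancel' _ (hji.trans (hii'.trans hji'.symm))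
  rw [hwi, hwi', hasPeriod_iff_getElem?_eq_of_modEq.1 hv j hj j' hj' hjj']

theorem hasPeriod_of_hasPeriod_take_of_hasPeriod_drop (htake : HasPeriod (w.take n) d)
    (hdrop : HasPeriod (w.drop m) d) (hmn : m + d ≤ n) : HasPeriod w d := by
  rw [hasPeriod_iff_getElem?] at htake hdrop ⊢
  intro i hi
  by_cases him : i < m
  · have h := htake i (by grind)
    rwa [List.getElem?_take_of_lt (by lia), List.getElem?_take_of_lt (by lia)] at h
  · have h := hdrop (i - m) (by grind)
    rwa [List.getElem?_drop, List.getElem?_drop, ← Nat.add_assoc,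
      Nat.add_sub_cancel' (Nat.le_of_not_lt him)] at h

theorem hasPeriod_gcd_of_hasPeriod_take_of_hasPeriod_drop (hp : 0 < p) (hq : 0 < q)
    (htake : HasPeriod (w.take n) p) (hdrop : HasPeriod (w.drop m) q)
    (hmn : m + p + q ≤ n + p.gcd q) (hn : n ≤ w.length) : HasPeriod w (p.gcd q) := by
  have hgp : p.gcd q ≤ p := Nat.gcd_le_left q hp
  have hgq : p.gcd q ≤ q := Nat.gcd_le_right p hq
  have overlap_infix_take : (w.take n).drop m <:+: w.take n := (List.drop_suffix m _).isInfix
  have overlap_infix_drop : (w.take n).drop m <:+: w.drop m := by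
    rw [List.drop_take]
    exact (List.take_prefix (n - m) _).isInfix
  have overlap_length : ((w.take n).drop m).length = n - m := by
    rw [List.length_drop, List.length_take_of_le hn]
  have overlap_gcd : HasPeriod ((w.take n).drop m) (p.gcd q) :=
    (htake.infix overlap_infix_take).gcd (hdrop.infix overlap_infix_drop) (by lia)
  have take_gcd : HasPeriod (w.take n) (p.gcd q) :=
    hasPeriod_of_isInfix_of_dvd hp (Nat.gcd_dvd_left p q) htake overlap_infix_take (by lia)
      overlap_gcd
  have drop_gcd : HasPeriod (w.drop m) (p.gcd q) :=
    hasPeriod_of_isInfix_of_dvd hq (Nat.gcd_dvd_right p q) hdrop overlap_infix_drop (by lia)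
      overlap_gcd
  exact hasPeriod_of_hasPeriod_take_of_hasPeriod_drop take_gcd drop_gcd (by lia)

theorem wordPow_succ (C : List α) (k : ℕ) : wordPow C (k + 1) = C ++ wordPow C k := by
  simp [wordPow, List.replicate_succ]

theorem wordPow_one (C : List α) : wordPow C 1 = C := by
  simp [wordPow]

theorem exists_eq_wordPow_append_of_hasPeriod {w : List α} (hp : 0 < p) (hw : HasPeriod w p) :
    ∃ I k, 0 < k ∧ I <+: w.take p ∧ w = wordPow (w.take p) k ++ I := by
  have hdrop : w.drop p <+: w := hw.drop_prefix
  rcases lt_or_ge (w.drop p).length p with hlt | hge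
  · refine ⟨w.drop p, 1, one_pos, List.prefix_take_iff.2 ⟨hdrop, hlt.le⟩, ?_⟩
    rw [wordPow_one, List.take_append_drop]
  · obtain ⟨I, k, -, hI, hk⟩ :=
      exists_eq_wordPow_append_of_hasPeriod hp (hw.infix hdrop.isInfix)
    have htake : (w.drop p).take p = w.take p := by
      obtain ⟨t, ht⟩ := hdrop
      rw [← List.take_append_of_le_length (l₂ := t) hge, ht]
    rw [htake] at hI hk
    refine ⟨I, k + 1, k.succ_pos, hI, ?_⟩
    rw [wordPow_succ, List.append_assoc, ← hk, List.take_append_drop]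
termination_by w.length
decreasing_by grind

end Periods

section Occurrences

variable {α : Type*} {W U : List α} {m r s : ℕ}

open List (HasPeriod)

theorem OccursAt.isPrefix_drop_append (hU : OccursAt W U r) (hr : r ≤ W.length)
    (hlen : r + U.length ≤ 2 * W.length) : U <+: W.drop r ++ W := by
  rw [List.prefix_iff_getElem?]
  intro i hi
  rw [← List.getElem?_eq_getElem hi, ← hU i hi]
  have hmod : (((r : ℤ) + i) % W.length).toNat = (r + i) % W.length := by norm_cast
  rw [hmod]
  rcases lt_or_ge (r + i) W.length with hlt | hge
  · rw [Nat.mod_eq_of_lt hlt, List.getElem?_append_left (by grind), List.getElem?_drop]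
  · rw [Nat.mod_eq_sub_mod hge, Nat.mod_eq_of_lt (by lia),
      List.getElem?_append_right (by grind), List.length_drop]
    congr 1
    lia

theorem OccursAt.hasPeriod_of_take_of_length_le (hU : OccursAt W (W.take m) r)
    (hr : r ≤ W.length) (hwrap : W.length ≤ r + m) : HasPeriod W r := by
  have hprefix : W.take m <+: W.drop r ++ W := hU.isPrefix_drop_append hr (by grind)
  have hdrop : W.drop r <+: W.take m :=
    List.prefix_of_prefix_length_le (List.prefix_append _ _) hprefix (by grind)
  exact hasPeriod_iff_drop_isPrefix.2 (hdrop.trans (List.take_prefix m W))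

theorem OccursAt.hasPeriod_of_drop_of_le (hV : OccursAt W (W.drop m) s) (hms : m ≤ s)
    (hs : s ≤ W.length) : HasPeriod W (m + (W.length - s)) := by
  have hprefix : W.drop m <+: W.drop s ++ W := hV.isPrefix_drop_append hs (by grind)
  rw [hasPeriod_iff_drop_isPrefix, ← List.drop_drop]
  simpa only [List.drop_left' List.length_drop] using hprefix.drop (W.length - s)

theorem OccursAt.hasPeriod_take_of_add_le (hU : OccursAt W (W.take m) r)
    (hrm : r + m ≤ W.length) : HasPeriod (W.take (r + m)) r := by
  have hprefix : W.take m <+: W.drop r :=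
    List.prefix_of_prefix_length_le (hU.isPrefix_drop_append (by lia) (by grind))
      (List.prefix_append _ _) (by grind)
  have hdrop : (W.take (r + m)).drop r = W.take m := by
    rw [List.drop_take, Nat.add_sub_cancel_left, List.prefix_iff_eq_take.1 hprefix,
      List.length_take_of_le (by lia)]
  rw [hasPeriod_iff_drop_isPrefix, hdrop]
  exact List.take_prefix_take_left (Nat.le_add_left m r)

theorem OccursAt.hasPeriod_drop_of_le (hV : OccursAt W (W.drop m) s) (hsm : s ≤ m)
    (hs : s ≤ W.length) : HasPeriod (W.drop s) (m - s) := by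
  rw [hasPeriod_iff_drop_isPrefix, List.drop_drop, Nat.add_sub_cancel' hsm]
  exact List.prefix_of_prefix_length_le (hV.isPrefix_drop_append hs (by grind))
    (List.prefix_append _ _) (by grind)

theorem exists_hasPeriod_of_occursAt (hr0 : 0 < r) (hrW : r < W.length)
    (hU : OccursAt W (W.take m) r) (hsW : s < W.length) (hsm : s ≠ m)
    (hV : OccursAt W (W.drop m) s) : ∃ p, 0 < p ∧ p < W.length ∧ HasPeriod W p := by
  rcases le_total W.length (r + m) with hwrap | hrm
  · exact ⟨r, hr0, hrW, hU.hasPeriod_of_take_of_length_le hrW.le hwrap⟩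
  rcases hsm.lt_or_gt with hlt | hgt
  · refine ⟨r.gcd (m - s), Nat.gcd_pos_of_pos_left _ hr0, (Nat.gcd_le_left _ hr0).trans_lt hrW, ?_⟩
    exact hasPeriod_gcd_of_hasPeriod_take_of_hasPeriod_drop hr0 (Nat.sub_pos_of_lt hlt)
      (hU.hasPeriod_take_of_add_le hrm) (hV.hasPeriod_drop_of_le hlt.le hsW.le) (by lia) hrm
  · exact ⟨m + (W.length - s), by lia, by lia, hV.hasPeriod_of_drop_of_le hgt.le hsW.le⟩

theorem statement0_general (W U V : List α) (hWUV : W = U ++ V)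
    (hr : ∃ r : ℕ, 0 < r ∧ r < W.length ∧ OccursAt W U r)
    (hs : ∃ s : ℕ, s < W.length ∧ s ≠ U.length ∧ OccursAt W V s) :
    ∃ (C I : List α) (k : ℕ), 0 < k ∧ 0 < C.length ∧ C.length < W.length ∧
      I <+: C ∧ W = wordPow C k ++ I := by
  obtain ⟨r, hr0, hrW, hU⟩ := hr
  obtain ⟨s, hsW, hsU, hV⟩ := hs
  have htake : W.take U.length = U := by rw [hWUV, List.take_left]
  have hdrop : W.drop U.length = V := by rw [hWUV, List.drop_left]
  rw [← htake] at hU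
  rw [← hdrop] at hV
  obtain ⟨p, hp, hpW, hper⟩ := exists_hasPeriod_of_occursAt hr0 hrW hU hsW hsU hV
  obtain ⟨I, k, hk, hI, hW⟩ := exists_eq_wordPow_append_of_hasPeriod hp hper
  have hlen : (W.take p).length = p := List.length_take_of_le hpW.le
  exact ⟨W.take p, I, k, hk, hlen.symm ▸ hp, hlen.symm ▸ hpW, hI, hW⟩

end Occurrences

/-- If a reduced, cyclically reduced word `W = U ++ V` (with `U`, `V` nonempty) is such
that `U` occurs at some offset `r` with `0 < r < n` in the bi-infinite periodic extension
of `W`, and `V` occurs at some offset `s < n` with `s ≠ |U|`, then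
`W = B ++ C^k ++ I` with `k > 0`, `0 < |C| < n`, `B` a suffix of `C` and `I` a prefix
of `C`. -/
theorem statement0 (W U V : List ((Fin 2) × Bool)) (n : ℕ)
    (hlen : W.length = n)
    (hred : Reduced W) (hcyc : CyclicallyReduced W)
    (hWUV : W = U ++ V) (hU : U ≠ []) (hV : V ≠ [])
    (hr : ∃ r : ℕ, 0 < r ∧ r < n ∧ OccursAt W U (r : ℤ))
    (hs : ∃ s : ℕ, s < n ∧ s ≠ U.length ∧ OccursAt W V (s : ℤ)) :
    ∃ (B C I : List ((Fin 2) × Bool)) (k : ℕ), 0 < k ∧ 0 < C.length ∧ C.length < n ∧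
      B <:+ C ∧ I <+: C ∧ W = B ++ wordPow C k ++ I := by
  subst hlen
  obtain ⟨C, I, k, hk, hC, hCW, hI, hW⟩ := statement0_general W U V hWUV hr hs
  exact ⟨[], C, I, k, hk, hC, hCW, C.nil_suffix, hI, hW⟩
end

section
/- Let W and W' be cyclically reduced words, both of length n ≥ 1, which represent conjugate elements of F₂. Suppose W = W₀ ++ [x] for some word W₀ and letter x, and suppose W₀ is an infix (contiguous subword) of W'. Then W' = [x] ++ W₀ or W' = W₀ ++ [x]. -/
/-!
Conjugate elements have equal images in the abelianization. As `W'` consists of `W₀` and one further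
letter `y` at one of its ends, cancelling the image of `W₀` there leaves `[x] = [y]`, and distinct
letters have distinct images in the abelianization of a free group, being told apart by their
exponent sums.
-/

section

variable {α : Type*}

theorem exists_eq_cons_or_eq_concat_of_isInfix {u v : List α} (h : u <:+: v)
    (hlen : v.length = u.length + 1) : ∃ y, v = [y] ++ u ∨ v = u ++ [y] := by
  obtain ⟨a, t, rfl⟩ := List.exists_cons_of_length_eq_add_one hlen
  rcases List.infix_cons_iff.mp h with ⟨q, hq⟩ | htail
  · have hq_length : q.length = 1 := by
      have := congrArg List.length hq
      rw [List.length_append, hlen] at this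
      lia
    obtain ⟨y, rfl⟩ := List.length_eq_one_iff.mp hq_length
    exact ⟨y, .inr hq.symm⟩
  · have hut : u = t := htail.eq_of_length (by simpa using hlen.symm)
    exact ⟨a, .inl (by rw [hut, List.singleton_append])⟩

theorem abelianization_of_mk_append (u v : List (α × Bool)) :
    Abelianization.of (FreeGroup.mk (u ++ v)) =
      Abelianization.of (FreeGroup.mk u) * Abelianization.of (FreeGroup.mk v) := by
  rw [← FreeGroup.mul_mk, map_mul]

/-- The exponent sums of the generators in an element of a free group, written multiplicatively so
that taking them is a group homomorphism. -/
noncomputable def exponentSums : FreeGroup α →* Multiplicative (α →₀ ℤ) :=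
  FreeGroup.lift fun i => .ofAdd (Finsupp.single i 1)

theorem exponentSums_mk_singleton (i : α) (b : Bool) :
    exponentSums (FreeGroup.mk [(i, b)]) = .ofAdd (Finsupp.single i (if b then 1 else -1)) := by
  cases b <;> simp [exponentSums, FreeGroup.lift_mk]

theorem exponentSums_mk_singleton_injective :
    Function.Injective fun a : α × Bool => exponentSums (FreeGroup.mk [a]) := by
  rintro ⟨i, b⟩ ⟨j, c⟩ h
  simp only [exponentSums_mk_singleton, EmbeddingLike.apply_eq_iff_eq] at h
  rcases (Finsupp.single_eq_single_iff ..).mp h with ⟨rfl, hsign⟩ | ⟨hzero, -⟩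
  · cases b <;> cases c <;> simp at hsign ⊢
  · cases b <;> simp at hzero

theorem abelianization_of_mk_singleton_injective :
    Function.Injective fun a : α × Bool => Abelianization.of (FreeGroup.mk [a]) := by
  intro a b h
  apply exponentSums_mk_singleton_injective
  simpa only [Abelianization.lift_apply_of] using congrArg (Abelianization.lift exponentSums) h

theorem statement3_general {W₀ W' : List (α × Bool)} {x : α × Bool}
    (hlen : W'.length = W₀.length + 1)
    (hab : Abelianization.of (FreeGroup.mk (W₀ ++ [x])) = Abelianization.of (FreeGroup.mk W'))
    (hinf : W₀ <:+: W') : W' = [x] ++ W₀ ∨ W' = W₀ ++ [x] := by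
  obtain ⟨y, rfl | rfl⟩ := exists_eq_cons_or_eq_concat_of_isInfix hinf hlen
  · rw [abelianization_of_mk_append, abelianization_of_mk_append, mul_comm] at hab
    have hxy : x = y := abelianization_of_mk_singleton_injective (mul_right_cancel hab)
    exact .inl (by rw [hxy])
  · rw [abelianization_of_mk_append, abelianization_of_mk_append] at hab
    have hxy : x = y := abelianization_of_mk_singleton_injective (mul_left_cancel hab)
    exact .inr (by rw [hxy])

end

/-- If `W` and `W'` are cyclically reduced words of the same length `n ≥ 1`
representing conjugate elements of `F₂`, `W = W₀ ++ [x]`, and `W₀` is an infix of `W'`,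
then `W' = [x] ++ W₀` or `W' = W₀ ++ [x]`. -/
theorem statement3 (W W' W₀ : List ((Fin 2) × Bool)) (x : (Fin 2) × Bool) (n : ℕ)
    (hn : 1 ≤ n) (hW : W.length = n) (hW' : W'.length = n)
    (hcW : CyclicallyReduced W) (hcW' : CyclicallyReduced W')
    (hconj : IsConj (FreeGroup.mk W) (FreeGroup.mk W'))
    (hdec : W = W₀ ++ [x]) (hinf : W₀ <:+: W') :
    W' = [x] ++ W₀ ∨ W' = W₀ ++ [x] := by
  subst hdec
  exact statement3_general (by rw [hW', ← hW, List.length_append, List.length_singleton])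
    (isConj_iff_eq.mp (Abelianization.of.map_isConj hconj)) hinf
end

section
/- Let a and b be elements of F₂, each belonging to the set {x, y, x⁻¹, y⁻¹} of generators and their inverses. If there exists u ∈ F₂ such that u * a is conjugate to b * u in F₂, then a = b. -/
/-! A homomorphism `φ` to a commutative group sends conjugate elements to the same element, so
`φ u * φ a = φ b * φ u` forces `φ a = φ b`. Abelianizing therefore reduces the claim to the free
abelian group, where distinct powers of generators remain distinct. -/

theorem map_eq_map_of_isConj_mul_mul {M N : Type*} [Monoid M] [CancelCommMonoid N] (φ : M →* N)
    {a b u : M} (h : IsConj (u * a) (b * u)) : φ a = φ b := by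
  have hφ : φ u * φ a = φ b * φ u := by
    simpa only [map_mul] using isConj_iff_eq.mp (φ.map_isConj h)
  exact mul_right_cancel ((mul_comm _ _).trans hφ)

section ExponentVector

open FreeGroup (of)
open Subgroup (zpowers)

variable {α : Type*}

/-- The abelianization map of the free group on `α`, recording the exponent sum of each generator.
The free abelian group on `α` is encoded multiplicatively as `Multiplicative (α →₀ ℤ)`. -/
noncomputable def exponentVector : FreeGroup α →* Multiplicative (α →₀ ℤ) :=
  FreeGroup.lift fun i ↦ Multiplicative.ofAdd (Finsupp.single i 1)

theorem exponentVector_of_zpow (i : α) (n : ℤ) :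
    exponentVector (of i ^ n) = Multiplicative.ofAdd (Finsupp.single i n) := by
  simp [exponentVector, ← ofAdd_zsmul]

theorem exponentVector_injOn_iUnion_zpowers_of :
    Set.InjOn exponentVector (⋃ i : α, (zpowers (of i) : Set (FreeGroup α))) := by
  intro a ha b hb hab
  obtain ⟨i, m, rfl⟩ := Set.mem_iUnion.mp ha
  obtain ⟨j, n, rfl⟩ := Set.mem_iUnion.mp hb
  have hsingle : Finsupp.single i m = Finsupp.single j n := by
    simpa only [exponentVector_of_zpow, Multiplicative.ofAdd.injective.eq_iff] using hab
  obtain ⟨rfl, rfl⟩ | ⟨rfl, rfl⟩ := (Finsupp.single_eq_single_iff i j m n).mp hsingle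
  · rfl
  · simp only [zpow_zero]

theorem generators_and_inverses_subset_iUnion_zpowers_of (i j : α) :
    ({of i, of j, (of i)⁻¹, (of j)⁻¹} : Set (FreeGroup α)) ⊆
      ⋃ k : α, (zpowers (of k) : Set (FreeGroup α)) := by
  rintro a (rfl | rfl | rfl | rfl)
  · exact Set.mem_iUnion_of_mem i (Subgroup.mem_zpowers _)
  · exact Set.mem_iUnion_of_mem j (Subgroup.mem_zpowers _)
  · exact Set.mem_iUnion_of_mem i (inv_mem (Subgroup.mem_zpowers _))
  · exact Set.mem_iUnion_of_mem j (inv_mem (Subgroup.mem_zpowers _))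

theorem statement4_general {a b u : FreeGroup α}
    (ha : a ∈ ⋃ i : α, (zpowers (of i) : Set (FreeGroup α)))
    (hb : b ∈ ⋃ i : α, (zpowers (of i) : Set (FreeGroup α)))
    (h : IsConj (u * a) (b * u)) : a = b :=
  exponentVector_injOn_iUnion_zpowers_of ha hb (map_eq_map_of_isConj_mul_mul exponentVector h)

end ExponentVector

/-- Let `a`, `b` be elements of `F₂ = FreeGroup (Fin 2)`, each a generator or the
inverse of a generator.  If `u * a` is conjugate to `b * u` for some `u ∈ F₂`,
then `a = b`. -/
theorem statement4 (a b : FreeGroup (Fin 2))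
    (ha : a ∈ ({FreeGroup.of 0, FreeGroup.of 1, (FreeGroup.of 0)⁻¹,
      (FreeGroup.of 1)⁻¹} : Set (FreeGroup (Fin 2))))
    (hb : b ∈ ({FreeGroup.of 0, FreeGroup.of 1, (FreeGroup.of 0)⁻¹,
      (FreeGroup.of 1)⁻¹} : Set (FreeGroup (Fin 2))))
    (h : ∃ u : FreeGroup (Fin 2), IsConj (u * a) (b * u)) :
    a = b := by
  obtain ⟨u, hu⟩ := h
  have hsub := generators_and_inverses_subset_iUnion_zpowers_of (0 : Fin 2) 1
  exact statement4_general (hsub ha) (hsub hb) hu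
end
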